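/- arXiv:2504.20688 — 2 statements merged into one kernel-verified Lean document; each statement's English description precedes it below -/
import Mathlib

section
/- Let R be an almost symmetric numerical semigroup of type t ≥ 2 with pseudo-Frobenius numbers a₁ < ... < a_t = F(R), such that a_i - a_{i-1} = 1 for i = 2, ..., t-1, and such that all of a₁, ..., a_{t-1} lie strictly between two consecutive small elements r_k and r_{k+1} of R. Then the set R' obtained from R by keeping the elements ≤ r_k and replacing each small element r_{k+i} (i ≥ 1) by r_{k+i} - t + 1 is a symmetric numerical set. -/
/-!
Write `F` for the Frobenius number. The reflection `x ↦ F - x` sends the elements of `R` below `F`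
to gaps, and no pseudo-Frobenius number other than `F` is such a reflection. Counting with
`2g = F + t` shows that these two families exhaust the gaps (`mem_or_of_almostSymmetric`); hence
`PF(R) \ {F}` is exactly the set of `z ≤ F` such that `z` and `F - z` are both gaps, and it is
stable under the reflection. Here that set is the interval `[p, p + t - 2]` with `p = a 0`, so
stability forces `F = 2p + t - 2`. Since no element of `R` lies strictly between `r_k` and
`r_{k+1}`, passing to `R'` deletes `t - 1` consecutive gaps, namely this interval: `x < p` is in
`R'` iff `x ∈ R`, and `x ≥ p` is in `R'` iff `x + (t - 1) ∈ R`. What survives is precisely the part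
of `[0, F]` on which the reflection exchanges elements and gaps, so `R'` is symmetric with
Frobenius number `2p - 1`.
-/

open Set

/-- A numerical set: contains 0 and has finite complement in ℕ. -/
def IsNumericalSet (R : Set ℕ) : Prop := 0 ∈ R ∧ Rᶜ.Finite

/-- A proper numerical set: a numerical set different from ℕ₀. -/
def ProperNumericalSet (R : Set ℕ) : Prop := 0 ∈ R ∧ Rᶜ.Finite ∧ Rᶜ.Nonempty

/-- The set of gaps of a numerical set. -/
def gaps (R : Set ℕ) : Set ℕ := Rᶜ

/-- The genus: the number of gaps. -/
noncomputable def genus (R : Set ℕ) : ℕ := Rᶜ.ncard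

/-- The Frobenius number: the largest gap (for a proper numerical set). -/
noncomputable def frob (R : Set ℕ) : ℕ := sSup Rᶜ

/-- The nsCond: F(R)+1 for a proper numerical set, and 0 for ℕ₀. -/
noncomputable def nsCond (R : Set ℕ) : ℕ := by
  classical exact if Rᶜ = ∅ then 0 else frob R + 1

/-- The dual numerical set: for 0 ≤ x ≤ F(R), x ∈ R* iff F(R)-x ∉ R,
together with all integers > F(R). -/
def dual (R : Set ℕ) : Set ℕ := {x | frob R < x ∨ frob R - x ∉ R}

/-- Symmetry: for every 0 ≤ a ≤ F(R), exactly one of a, F(R)-a belongs to R. -/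
def IsSymmetric (R : Set ℕ) : Prop := ∀ a ≤ frob R, (a ∈ R ↔ frob R - a ∉ R)

/-- Bonded sum: left elements of R, then F(R) = c(R)-1, then S shifted up by c(R)-1. -/
def bsum (R S : Set ℕ) : Set ℕ := (R ∩ Iio (nsCond R)) ∪ ((· + (nsCond R - 1)) '' S)

/-- End-to-end sum: small elements of R, then S shifted up by c(R). -/
def esum (R S : Set ℕ) : Set ℕ := (R ∩ Iio (nsCond R)) ∪ ((· + nsCond R) '' S)

/-- Conjoint sum: left elements of R, then the nonzero part of S shifted up by c(R)-1. -/
def csum (R S : Set ℕ) : Set ℕ := (R ∩ Iio (nsCond R)) ∪ ((· + (nsCond R - 1)) '' (S \ {0}))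

/-- The numerical set R - r obtained by subtracting r from all elements of R that are ≥ r. -/
def shiftDown (R : Set ℕ) (r : ℕ) : Set ℕ := {x | x + r ∈ R}

/-- Hook set of the column corresponding to a left element r of R. -/
def hookSet (R : Set ℕ) (r : ℕ) : Set ℕ := gaps (shiftDown R r)

/-- Pseudo-Frobenius numbers. -/
def PF (R : Set ℕ) : Set ℕ := {z | z ∉ R ∧ ∀ r ∈ R, r ≠ 0 → z + r ∈ R}

/-- The type of a numerical semigroup. -/
noncomputable def typ (R : Set ℕ) : ℕ := (PF R).ncard

/-- A numerical semigroup: a numerical set closed under addition. -/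
def IsNumericalSemigroup (R : Set ℕ) : Prop :=
  IsNumericalSet R ∧ ∀ x ∈ R, ∀ y ∈ R, x + y ∈ R

/-- Almost symmetric numerical semigroup: 2g(R) = F(R) + t(R). -/
def AlmostSymmetric (R : Set ℕ) : Prop := 2 * genus R = frob R + typ R

lemma le_frob {R : Set ℕ} (hf : Rᶜ.Finite) {x : ℕ} (hx : x ∉ R) : x ≤ frob R :=
  le_csSup hf.bddAbove hx

lemma frob_not_mem {R : Set ℕ} (hf : Rᶜ.Finite) (hne : Rᶜ.Nonempty) : frob R ∉ R :=
  Nat.sSup_mem hne hf.bddAbove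

lemma frob_eq {R : Set ℕ} {n : ℕ} (hn : n ∉ R) (h : ∀ x, n < x → x ∈ R) : frob R = n :=
  IsGreatest.csSup_eq ⟨hn, fun x hx => not_lt.1 fun hlt => hx (h x hlt)⟩

lemma frob_mem_PF {R : Set ℕ} (hf : Rᶜ.Finite) (hne : Rᶜ.Nonempty) : frob R ∈ PF R := by
  refine ⟨frob_not_mem hf hne, fun r _ hr0 => ?_⟩
  by_contra h
  have := le_frob hf h
  omega

/-- If `F - z` were in `R`, then adding it to the pseudo-Frobenius number `z` would give
`F ∈ R`. -/
lemma frob_sub_not_mem {R : Set ℕ} (hf : Rᶜ.Finite) (hne : Rᶜ.Nonempty) {z : ℕ}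
    (hz : z ∈ PF R) (hzF : z ≠ frob R) : frob R - z ∉ R := by
  intro h
  have hle := le_frob hf hz.1
  have := hz.2 _ h (by omega)
  rw [Nat.add_sub_cancel' hle] at this
  exact frob_not_mem hf hne this

/-- The pointwise form of almost symmetry: every gap is either pseudo-Frobenius or the reflection
of an element of the semigroup. -/
lemma mem_or_of_almostSymmetric {R : Set ℕ} (hR : IsNumericalSemigroup R) (hne : Rᶜ.Nonempty)
    (has : AlmostSymmetric R) {z : ℕ} (hz : z ∉ R) : z ∈ PF R ∨ frob R - z ∈ R := by
  obtain ⟨⟨h0, hf⟩, hadd⟩ := hR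
  have hFn := frob_not_mem hf hne
  set F := frob R with hF
  have hPFsub : PF R ⊆ Rᶜ := fun x hx => hx.1
  have hBcard : (PF R \ {F}).ncard + 1 = (PF R).ncard :=
    Set.ncard_sdiff_singleton_add_one (frob_mem_PF hf hne) (hf.subset hPFsub)
  have hAcard : ((fun x => F - x) '' (R ∩ Iic F)).ncard = (R ∩ Iic F).ncard := by
    apply Set.InjOn.ncard_image
    intro x hx y hy hxy
    have h1 : x ≤ F := hx.2
    have h2 : y ≤ F := hy.2
    simp only at hxy
    omega
  have hsplit : (R ∩ Iic F).ncard + Rᶜ.ncard = F + 1 := by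
    rw [← Set.ncard_union_eq (disjoint_compl_right.mono_left inter_subset_left)
      ((finite_Iic F).subset inter_subset_right) hf]
    have : R ∩ Iic F ∪ Rᶜ = Iic F := by
      ext x
      have := fun h : x ∉ R => le_frob hf h
      simp only [mem_union, mem_inter_iff, mem_Iic, mem_compl_iff]
      tauto
    rw [this, ← Finset.coe_Iic, Set.ncard_coe_finset, Nat.card_Iic]
  have hsub : (fun x => F - x) '' (R ∩ Iic F) ∪ (PF R \ {F}) ⊆ Rᶜ := by
    rintro x (⟨y, ⟨hy, hyF⟩, rfl⟩ | hx)
    · intro hx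
      have := hadd _ hx _ hy
      rw [Nat.sub_add_cancel hyF] at this
      exact hFn this
    · exact hx.1.1
  have hdisj : Disjoint ((fun x => F - x) '' (R ∩ Iic F)) (PF R \ {F}) := by
    rw [Set.disjoint_left]
    rintro _ ⟨y, ⟨hy, hyF⟩, rfl⟩ hx
    apply frob_sub_not_mem hf hne hx.1 hx.2
    rwa [← hF, Nat.sub_sub_self hyF]
  have hcard : Rᶜ.ncard ≤ ((fun x => F - x) '' (R ∩ Iic F) ∪ (PF R \ {F})).ncard := by
    rw [Set.ncard_union_eq hdisj (((finite_Iic F).subset inter_subset_right).image _)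
      (hf.subset (sdiff_subset.trans hPFsub))]
    unfold AlmostSymmetric genus typ at has
    omega
  have heq := Set.eq_of_subset_of_ncard_le hsub hcard hf
  have hz' : z ∈ Rᶜ := hz
  rw [← heq] at hz'
  rcases hz' with ⟨y, ⟨hy, hyF⟩, rfl⟩ | hx
  · right
    rwa [Nat.sub_sub_self hyF]
  · exact Or.inl hx.1

theorem stmt_18 (R : Set ℕ) (hR : IsNumericalSemigroup R) (hproper : Rᶜ.Nonempty)
    (t : ℕ) (ht : 2 ≤ t) (htyp : typ R = t) (has : AlmostSymmetric R)
    (a : ℕ → ℕ) (hmono : StrictMonoOn a (Set.Iio t))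
    (hrange : PF R = a '' Set.Iio t) (hlast : a (t - 1) = frob R)
    (hconsec : ∀ i, 1 ≤ i → i ≤ t - 2 → a i = a (i - 1) + 1)
    (rk rk1 : ℕ) (hrk : rk ∈ R) (hrk1 : rk1 ∈ R) (hlt : rk < rk1)
    (hsmall : rk1 ≤ nsCond R) (hconsecR : ∀ x ∈ R, rk < x → rk1 ≤ x)
    (h1 : rk < a 0) (h2 : a (t - 2) < rk1) :
    ProperNumericalSet ((R ∩ Set.Iic rk) ∪ ((fun x => x - (t - 1)) '' (R ∩ Set.Ioi rk))) ∧
    IsSymmetric ((R ∩ Set.Iic rk) ∪ ((fun x => x - (t - 1)) '' (R ∩ Set.Ioi rk))) := by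
  have hmem := fun z => mem_or_of_almostSymmetric (z := z) hR hproper has
  obtain ⟨⟨h0, hf⟩, hadd⟩ := hR
  have hFn := frob_not_mem hf hproper
  have hrefl := fun z => frob_sub_not_mem (z := z) hf hproper
  have hle := fun z => le_frob (x := z) hf
  have ha : ∀ i, i ≤ t - 2 → a i = a 0 + i := by
    intro i
    induction i with
    | zero => simp
    | succ i ih =>
      intro hi
      have := hconsec (i + 1) (by omega) hi
      rw [Nat.add_sub_cancel, ih (by omega)] at this
      omega
  have htop : a (t - 2) = a 0 + (t - 2) := ha _ le_rfl
  have hltF : a (t - 2) < frob R := by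
    rw [← hlast]
    exact hmono (show t - 2 < t by omega) (show t - 1 < t by omega) (by omega)
  set F := frob R with hF
  set p := a 0 with hp
  have hPF : ∀ z, (z ∈ PF R ∧ z ≠ F) ↔ (p ≤ z ∧ z ≤ p + (t - 2)) := by
    intro z
    rw [hrange]
    constructor
    · rintro ⟨⟨i, hi, rfl⟩, hne⟩
      have hi' : i < t := hi
      have : i ≠ t - 1 := by
        rintro rfl
        exact hne hlast
      have := ha i (by omega)
      omega
    · rintro ⟨hz1, hz2⟩
      refine ⟨⟨z - p, show z - p < t by omega, ?_⟩, by omega⟩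
      rw [ha _ (by omega)]
      omega
  -- `[p, p + (t - 2)]` is stable under `z ↦ F - z`, which fixes its position.
  have hstable : ∀ z, p ≤ z → z ≤ p + (t - 2) → p ≤ F - z ∧ F - z ≤ p + (t - 2) := by
    intro z hz1 hz2
    have hz := (hPF z).2 ⟨hz1, hz2⟩
    have hnot := hrefl z hz.1 hz.2
    refine (hPF _).1 ⟨(hmem _ hnot).resolve_right ?_, by omega⟩
    rw [Nat.sub_sub_self (by omega)]
    exact hz.1.1
  have hFp : F = 2 * p + (t - 2) := by
    have e1 := hstable p le_rfl (by omega)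
    have e2 := hstable (p + (t - 2)) (by omega) le_rfl
    omega
  have hsym : ∀ z, z ≤ F → (z < p ∨ p + (t - 2) < z) → (z ∈ R ↔ F - z ∉ R) := by
    intro z hzF hz
    constructor
    · intro h1 h2
      have := hadd _ h1 _ h2
      rw [Nat.add_sub_cancel' hzF] at this
      exact hFn this
    · intro h
      by_contra hzR
      have hzPF := (hmem z hzR).resolve_right h
      have hne : z ≠ F := by
        rintro rfl
        exact h (by simpa using h0)
      have := (hPF z).1 ⟨hzPF, hne⟩
      omega
  have hR' : ∀ x, x ∈ (R ∩ Set.Iic rk) ∪ ((fun x => x - (t - 1)) '' (R ∩ Set.Ioi rk)) ↔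
      (x < p ∧ x ∈ R) ∨ (p ≤ x ∧ x + (t - 1) ∈ R) := by
    intro x
    constructor
    · rintro (⟨hx, hxr⟩ | ⟨y, ⟨hy, hyr⟩, rfl⟩)
      · have : x ≤ rk := hxr
        exact Or.inl ⟨by omega, hx⟩
      · have := hconsecR y hy hyr
        refine Or.inr ⟨by simp only; omega, ?_⟩
        simp only
        rwa [Nat.sub_add_cancel (by omega)]
    · rintro (⟨hx, hxR⟩ | ⟨hx, hxR⟩)
      · refine Or.inl ⟨hxR, show x ≤ rk from not_lt.1 fun h => ?_⟩
        have := hconsecR x hxR h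
        omega
      · exact Or.inr ⟨x + (t - 1), ⟨hxR, show rk < x + (t - 1) by omega⟩, by simp⟩
  generalize (R ∩ Set.Iic rk) ∪ ((fun x => x - (t - 1)) '' (R ∩ Set.Ioi rk)) = R' at hR' ⊢
  have hgap : 2 * p - 1 ∉ R' := by
    rw [hR']
    rintro (⟨h, -⟩ | ⟨-, h⟩)
    · omega
    · exact hFn (by rwa [show F = 2 * p - 1 + (t - 1) by omega])
  have hlarge : ∀ x, 2 * p - 1 < x → x ∈ R' := by
    intro x hx
    refine (hR' x).2 (Or.inr ⟨by omega, ?_⟩)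
    by_contra h
    have := hle _ h
    omega
  refine ⟨⟨(hR' 0).2 (Or.inl ⟨by omega, h0⟩), ?_, ⟨_, hgap⟩⟩, ?_⟩
  · exact (finite_Iic (2 * p - 1)).subset fun x hx => not_lt.1 fun h => hx (hlarge x h)
  · intro x hx
    rw [frob_eq hgap hlarge] at hx ⊢
    rw [hR', hR']
    rcases lt_or_ge x p with hxp | hxp
    · have := hsym x (by omega) (Or.inl hxp)
      rw [show F - x = 2 * p - 1 - x + (t - 1) by omega] at this
      have h3 : p ≤ 2 * p - 1 - x := by omega
      simp only [hxp, h3, not_le.2 hxp, not_lt.2 h3, true_and, false_and, or_false, false_or]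
      exact this
    · have := hsym (x + (t - 1)) (by omega) (Or.inr (by omega))
      rw [show F - (x + (t - 1)) = 2 * p - 1 - x by omega] at this
      have h3 : 2 * p - 1 - x < p := by omega
      simp only [hxp, h3, not_lt.2 hxp, not_le.2 h3, true_and, false_and, or_false, false_or]
      exact this
end

section
/- Let R be an almost symmetric numerical semigroup of type t ≥ 2, R ≠ {0, t+1, →}, with pseudo-Frobenius numbers a₁ < ... < a_t = F(R) satisfying a_i - a_{i-1} = 1 for i = 2, ..., t-1, and all of a₁, ..., a_{t-1} lying strictly between consecutive small elements r_{k-1} and r_k of R. Then there exists a unique proper numerical set S such that R = S ⊞_C {0, t+1, →} ⊞_B S* or R = S ⊞_B {0, t+1, →} ⊞_C S*. -/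
/-!
The proof rests on the reflection `x ↦ F - x` of `[0, F]`, where `F = F(R)`. It sends elements of `R`
to gaps, and every pseudo-Frobenius number other than `F` is a gap whose reflection is a gap too.
Counting the gaps, `2 g(R) = F + t` says exactly that no other gap has this property
(`mem_PF_of_reflected_gap`). Under the hypotheses these numbers therefore fill an interval
`[A, A + t - 2]`, which the reflection preserves, so `2 A + t - 2 = F`; outside the interval exactly
one of `x`, `F - x` is in `R`. In particular this holds for `x = A - 1`, reflected to `A + t - 1`.

On the other side, with `s = F(S)`, both composite sums have Frobenius number `2 s + t`, agree with
`S` below `s`, and are antisymmetric under the reflection outside the middle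
(`mem_bsum_csum`, `mem_csum_bsum`); they differ in which of `s`, `s + t` they contain.
So necessarily `s = A - 1` and `S = (R ∩ [0, s)) ∪ (s, ∞)`, which gives uniqueness. Conversely this
`S` works: the first form occurs when `A - 1 ∉ R`, the second when `A - 1 ∈ R`. It is proper because
`A = 1` would force `R = {0, t + 1, →}`.
-/

open Set

/-! ### Frobenius number and membership in the sums -/

theorem frob_eq_of_gap {S : Set ℕ} {s : ℕ} (h : s ∉ S) (h' : ∀ x, s < x → x ∈ S) :
    frob S = s := by
  have : IsGreatest Sᶜ s := ⟨h, fun x hx => by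
    by_contra hlt
    exact hx (h' x (by omega))⟩
  exact this.csSup_eq

theorem nsCond_eq_of_gap {S : Set ℕ} {s : ℕ} (h : s ∉ S) (h' : ∀ x, s < x → x ∈ S) :
    nsCond S = s + 1 := by
  have hne : Sᶜ ≠ ∅ := Set.Nonempty.ne_empty ⟨s, h⟩
  simp only [nsCond, hne, if_false, frob_eq_of_gap h h']

theorem frob_spec {S : Set ℕ} (hS : ProperNumericalSet S) :
    frob S ∉ S ∧ (∀ x, frob S < x → x ∈ S) ∧ 0 < frob S := by
  obtain ⟨h0, hfin, hne⟩ := hS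
  have hmem : frob S ∉ S := Nat.sSup_mem hne hfin.bddAbove
  refine ⟨hmem, fun x hx => ?_, ?_⟩
  · by_contra hxS
    exact absurd (le_csSup hfin.bddAbove hxS) (not_le.mpr hx)
  · rcases Nat.eq_zero_or_pos (frob S) with h | h
    · exact absurd h0 (h ▸ hmem)
    · exact h

theorem mem_bsum_iff {R S : Set ℕ} {s : ℕ} (h : s ∉ R) (h' : ∀ x, s < x → x ∈ R) (x : ℕ) :
    x ∈ bsum R S ↔ (x < s ∧ x ∈ R) ∨ (s ≤ x ∧ x - s ∈ S) := by
  simp only [bsum, nsCond_eq_of_gap h h', mem_union, mem_inter_iff, mem_Iio, mem_image,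
    Nat.add_sub_cancel]
  refine or_congr ⟨fun ⟨hx, hlt⟩ => ⟨?_, hx⟩, fun ⟨hlt, hx⟩ => ⟨hx, by omega⟩⟩
    ⟨?_, fun ⟨hle, hx⟩ => ⟨x - s, hx, by omega⟩⟩
  · have : x ≠ s := fun e => h (e ▸ hx)
    omega
  · rintro ⟨y, hy, rfl⟩
    exact ⟨by omega, by simpa using hy⟩

theorem mem_csum_iff {R S : Set ℕ} {s : ℕ} (h : s ∉ R) (h' : ∀ x, s < x → x ∈ R) (x : ℕ) :
    x ∈ csum R S ↔ (x < s ∧ x ∈ R) ∨ (s < x ∧ x - s ∈ S) := by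
  have key : csum R S = bsum R (S \ {0}) := rfl
  rw [key, mem_bsum_iff h h', mem_sdiff, mem_singleton_iff]
  refine or_congr Iff.rfl ⟨fun ⟨h1, h2, h3⟩ => ⟨by omega, h2⟩, fun ⟨h1, h2⟩ => ⟨h1.le, h2, by omega⟩⟩

theorem mem_middle (t y : ℕ) : y ∈ ({0} ∪ Set.Ici (t + 1) : Set ℕ) ↔ y = 0 ∨ t + 1 ≤ y := by
  simp

/-- Elements of `S ⊞_C {0, t+1, →} ⊞_B S*`, in terms of `s = F(S)`. -/
theorem mem_bsum_csum {S : Set ℕ} {s t : ℕ} (h : s ∉ S) (h' : ∀ x, s < x → x ∈ S) (x : ℕ) :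
    x ∈ bsum (csum S ({0} ∪ Set.Ici (t + 1))) (dual S) ↔
      (x < s ∧ x ∈ S) ∨ (s + t ≤ x ∧ (2 * s + t < x ∨ 2 * s + t - x ∉ S)) := by
  have hm : ∀ y, y ∈ csum S ({0} ∪ Set.Ici (t + 1)) ↔ (y < s ∧ y ∈ S) ∨ s + t < y := fun y => by
    rw [mem_csum_iff h h', mem_middle]
    exact or_congr Iff.rfl (by omega)
  have hg : s + t ∉ csum S ({0} ∪ Set.Ici (t + 1)) := by rw [hm]; omega
  have hg' : ∀ y, s + t < y → y ∈ csum S ({0} ∪ Set.Ici (t + 1)) := fun y hy => (hm y).2 (.inr hy)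
  rw [mem_bsum_iff hg hg', hm]
  have e : s + t ≤ x → s - (x - (s + t)) = 2 * s + t - x := by omega
  simp only [dual, mem_ofPred_eq, frob_eq_of_gap h h']
  constructor
  · rintro (⟨h1, h2 | h2⟩ | ⟨h1, h2 | h2⟩)
    · exact .inl h2
    · omega
    · exact .inr ⟨h1, .inl (by omega)⟩
    · exact .inr ⟨h1, .inr (e h1 ▸ h2)⟩
  · rintro (⟨h1, h2⟩ | ⟨h1, h2 | h2⟩)
    · exact .inl ⟨by omega, .inl ⟨h1, h2⟩⟩
    · exact .inr ⟨h1, .inl (by omega)⟩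
    · exact .inr ⟨h1, .inr ((e h1).symm ▸ h2)⟩

/-- Elements of `S ⊞_B {0, t+1, →} ⊞_C S*`, in terms of `s = F(S)`. -/
theorem mem_csum_bsum {S : Set ℕ} {s t : ℕ} (h : s ∉ S) (h' : ∀ x, s < x → x ∈ S) (ht : 0 < t)
    (x : ℕ) :
    x ∈ csum (bsum S ({0} ∪ Set.Ici (t + 1))) (dual S) ↔
      (x < s ∧ x ∈ S) ∨ x = s ∨ (s + t < x ∧ (2 * s + t < x ∨ 2 * s + t - x ∉ S)) := by
  have hm : ∀ y, y ∈ bsum S ({0} ∪ Set.Ici (t + 1)) ↔ (y < s ∧ y ∈ S) ∨ (y = s ∨ s + t < y) :=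
    fun y => by
      rw [mem_bsum_iff h h', mem_middle]
      exact or_congr Iff.rfl (by omega)
  have hg : s + t ∉ bsum S ({0} ∪ Set.Ici (t + 1)) := by rw [hm]; omega
  have hg' : ∀ y, s + t < y → y ∈ bsum S ({0} ∪ Set.Ici (t + 1)) :=
    fun y hy => (hm y).2 (.inr (.inr hy))
  rw [mem_csum_iff hg hg', hm]
  have e : s + t ≤ x → s - (x - (s + t)) = 2 * s + t - x := by omega
  simp only [dual, mem_ofPred_eq, frob_eq_of_gap h h']
  constructor
  · rintro (⟨h1, h2 | h2 | h2⟩ | ⟨h1, h2 | h2⟩)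
    · exact .inl h2
    · exact .inr (.inl h2)
    · omega
    · exact .inr (.inr ⟨h1, .inl (by omega)⟩)
    · exact .inr (.inr ⟨h1, .inr (e h1.le ▸ h2)⟩)
  · rintro (⟨h1, h2⟩ | h1 | ⟨h1, h2 | h2⟩)
    · exact .inl ⟨by omega, .inl ⟨h1, h2⟩⟩
    · exact .inl ⟨by omega, .inr (.inl h1)⟩
    · exact .inr ⟨h1, .inl (by omega)⟩
    · exact .inr ⟨h1, .inr ((e h1.le).symm ▸ h2)⟩

/-- Either composite sum determines `F(S)` and the part of `S` below it. -/
theorem composite_sum_spec {R S : Set ℕ} {t : ℕ} (ht : 0 < t) (hS : ProperNumericalSet S)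
    (h : R = bsum (csum S ({0} ∪ Set.Ici (t + 1))) (dual S) ∨
      R = csum (bsum S ({0} ∪ Set.Ici (t + 1))) (dual S)) :
    frob R = 2 * frob S + t ∧ ∀ x < frob S, (x ∈ R ↔ x ∈ S) := by
  obtain ⟨hs, hs', hpos⟩ := frob_spec hS
  have h0 : 0 ∈ S := hS.1
  rcases h with rfl | rfl
  · refine ⟨frob_eq_of_gap ?_ fun x hx => ?_, fun x hx => ?_⟩
    · rw [mem_bsum_csum hs hs']
      simp only [lt_irrefl, Nat.sub_self, h0, not_true, or_false, and_false]
      omega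
    · rw [mem_bsum_csum hs hs']
      exact .inr ⟨by omega, .inl hx⟩
    · rw [mem_bsum_csum hs hs']
      exact ⟨fun h => h.elim And.right fun h => by omega, fun h => .inl ⟨hx, h⟩⟩
  · refine ⟨frob_eq_of_gap ?_ fun x hx => ?_, fun x hx => ?_⟩
    · rw [mem_csum_bsum hs hs' ht]
      simp only [lt_irrefl, Nat.sub_self, h0, not_true, or_false, and_false]
      omega
    · rw [mem_csum_bsum hs hs' ht]
      exact .inr (.inr ⟨by omega, .inl hx⟩)
    · rw [mem_csum_bsum hs hs' ht]
      exact ⟨fun h => h.elim And.right fun h => by omega, fun h => .inl ⟨hx, h⟩⟩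

/-! ### The reflection of an almost symmetric semigroup -/

/-- A pseudo-Frobenius number other than `F` cannot be the reflection of an element. -/
theorem reflected_gap_of_mem_PF {R : Set ℕ} (hF : frob R ∉ R) {x : ℕ} (hx : x ∈ PF R)
    (hle : x ≤ frob R) (hne : x ≠ frob R) : frob R - x ∉ R := fun h => by
  have := hx.2 _ h (by omega)
  rw [Nat.add_sub_cancel' hle] at this
  exact hF this

/-- In an almost symmetric semigroup, a gap reflected to a gap is pseudo-Frobenius. -/
theorem mem_PF_of_reflected_gap {R : Set ℕ} (hadd : ∀ x ∈ R, ∀ y ∈ R, x + y ∈ R)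
    (hF : frob R ∉ R) (hF' : ∀ x, frob R < x → x ∈ R) (has : AlmostSymmetric R) {x : ℕ}
    (hx : x ∉ R) (hx' : frob R - x ∉ R) : x ∈ PF R := by
  classical
  unfold AlmostSymmetric genus typ at has
  set F := frob R with hFdef
  let I := Finset.range (F + 1)
  have hI : ∀ {y}, y ∉ R → y ∈ I := fun {y} hy => by
    rw [Finset.mem_range]
    by_contra h
    exact hy (hF' y (by omega))
  let G := I.filter (· ∉ R)
  let P := I.filter (· ∈ PF R)
  let L := I.filter fun y => y ∉ R ∧ F - y ∉ R
  have hG : Rᶜ = (G : Set ℕ) := by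
    ext y
    simp only [G, Finset.coe_filter, mem_compl_iff, mem_ofPred_eq]
    exact ⟨fun h => ⟨hI h, h⟩, And.right⟩
  have hP : PF R = (P : Set ℕ) := by
    ext y
    simp only [P, Finset.coe_filter, mem_ofPred_eq]
    exact ⟨fun h => ⟨hI h.1, h⟩, And.right⟩
  rw [hP, hG, Set.ncard_coe_finset, Set.ncard_coe_finset] at has
  have c1 : (I.filter (· ∈ R)).card + G.card = F + 1 := by
    rw [Finset.card_filter_add_card_filter_not, Finset.card_range]
  have c2 : (G.filter (fun y => F - y ∈ R)).card + L.card = G.card := by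
    rw [← Finset.card_filter_add_card_filter_not (s := G) (fun y => F - y ∈ R)]
    simp only [G, L, Finset.filter_filter]
  -- The reflection matches the elements of `R` below `F` with the gaps it sends into `R`.
  have c3 : (I.filter (· ∈ R)).card ≤ (G.filter (fun y => F - y ∈ R)).card := by
    refine Finset.card_le_card_of_injOn (fun y => F - y) (fun y hy => ?_) fun y hy z hz hyz => ?_
    · simp only [I, Finset.coe_filter, Finset.mem_range, mem_ofPred_eq] at hy
      simp only [G, I, Finset.coe_filter, Finset.mem_filter, Finset.mem_range, mem_ofPred_eq]
      refine ⟨⟨by omega, fun h => hF ?_⟩, ?_⟩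
      · have := hadd _ hy.2 _ h
        rwa [Nat.add_sub_cancel' (by omega)] at this
      · rw [Nat.sub_sub_self (by omega)]
        exact hy.2
    · simp only [I, Finset.coe_filter, Finset.mem_range, mem_ofPred_eq] at hy hz
      simp only at hyz
      omega
  have hsub : P.erase F ⊆ L := fun y hy => by
    simp only [P, I, Finset.mem_erase, Finset.mem_filter, Finset.mem_range] at hy
    simp only [L, I, Finset.mem_filter, Finset.mem_range]
    exact ⟨hy.2.1, hy.2.2.1, reflected_gap_of_mem_PF hF hy.2.2 (by omega) hy.1⟩
  have hcard : L.card ≤ (P.erase F).card := by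
    have := Finset.pred_card_le_card_erase (s := P) (a := F)
    omega
  have hxL : x ∈ L := Finset.mem_filter.2 ⟨hI hx, hx, hx'⟩
  rw [← Finset.eq_of_subset_of_card_le hsub hcard] at hxL
  exact (Finset.mem_filter.1 (Finset.mem_of_mem_erase hxL)).2

/-! ### The decomposition -/

theorem stmt_19 (R : Set ℕ) (hR : IsNumericalSemigroup R) (hproper : Rᶜ.Nonempty)
    (t : ℕ) (ht : 2 ≤ t) (htyp : typ R = t) (has : AlmostSymmetric R)
    (hne : R ≠ {0} ∪ Set.Ici (t + 1))
    (a : ℕ → ℕ) (hmono : StrictMonoOn a (Set.Iio t))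
    (hrange : PF R = a '' Set.Iio t) (hlast : a (t - 1) = frob R)
    (hconsec : ∀ i, 1 ≤ i → i ≤ t - 2 → a i = a (i - 1) + 1)
    (rk0 rk : ℕ) (hrk0 : rk0 ∈ R) (hrk : rk ∈ R) (hlt : rk0 < rk)
    (hsmall : rk ≤ nsCond R) (hconsecR : ∀ x ∈ R, rk0 < x → rk ≤ x)
    (h1 : rk0 < a 0) (h2 : a (t - 2) < rk) :
    ∃! S : Set ℕ, ProperNumericalSet S ∧
      (R = bsum (csum S ({0} ∪ Set.Ici (t + 1))) (dual S) ∨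
       R = csum (bsum S ({0} ∪ Set.Ici (t + 1))) (dual S)) := by
  obtain ⟨⟨h0, hfin⟩, hadd⟩ := hR
  obtain ⟨hF, hF', -⟩ := frob_spec (S := R) ⟨h0, hfin, hproper⟩
  set F := frob R with hFdef
  have hai : ∀ i, i ≤ t - 2 → a i = a 0 + i := by
    intro i
    induction i with
    | zero => intro _; rfl
    | succ k ih =>
      intro hk
      have h1 := hconsec (k + 1) (by omega) hk
      have h2 := ih (by omega)
      rw [Nat.add_sub_cancel] at h1
      omega
  -- The gaps reflected to gaps are exactly `[a 0, a 0 + (t - 2)]`.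
  have hmid : ∀ x ≤ F, (x ∉ R ∧ F - x ∉ R) ↔ (a 0 ≤ x ∧ x ≤ a 0 + (t - 2)) := by
    intro x hx
    constructor
    · rintro ⟨hxR, hxR'⟩
      have hPF := mem_PF_of_reflected_gap hadd hF hF' has hxR hxR'
      rw [hrange] at hPF
      obtain ⟨i, hi, rfl⟩ := hPF
      rw [mem_Iio] at hi
      have hne : i ≠ t - 1 := by
        rintro rfl
        rw [hlast, Nat.sub_self] at hxR'
        exact hxR' h0
      have := hai i (by omega)
      omega
    · rintro ⟨hx1, hx2⟩
      have e : a (x - a 0) = x := by rw [hai _ (by omega)]; omega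
      have hlt : a (x - a 0) < a (t - 1) :=
        hmono (mem_Iio.2 (by omega)) (mem_Iio.2 (by omega)) (by omega)
      have hPF : x ∈ PF R := by
        rw [hrange]
        exact ⟨x - a 0, mem_Iio.2 (by omega), e⟩
      exact ⟨hPF.1, reflected_gap_of_mem_PF hF hPF hx (by omega)⟩
  have hBF : a 0 + (t - 2) < F := by
    rw [← hai (t - 2) le_rfl, ← hlast]
    exact hmono (mem_Iio.2 (by omega)) (mem_Iio.2 (by omega)) (by omega)
  have hreflect : ∀ x ≤ F, x ∉ R ∧ F - x ∉ R → F - x ∉ R ∧ F - (F - x) ∉ R := by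
    intro x hx h
    rw [Nat.sub_sub_self hx]
    exact h.symm
  -- Reflecting the two endpoints shows that the interval is centred at `F / 2`.
  have hAF : 2 * a 0 + (t - 2) = F := by
    have hA := (hmid _ (by omega)).1
      (hreflect (a 0) (by omega) ((hmid _ (by omega)).2 ⟨le_rfl, by omega⟩))
    have hB := (hmid _ (by omega)).1
      (hreflect (a 0 + (t - 2)) (by omega) ((hmid _ (by omega)).2 ⟨by omega, le_rfl⟩))
    omega
  have hgap : ∀ x, a 0 ≤ x → x ≤ a 0 + (t - 2) → x ∉ R :=
    fun x h1 h2 => ((hmid x (by omega)).2 ⟨h1, h2⟩).1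
  have hsym : ∀ x ≤ F, ¬ (a 0 ≤ x ∧ x ≤ a 0 + (t - 2)) → (x ∈ R ↔ F - x ∉ R) := by
    intro x hx hxm
    constructor
    · intro h h'
      have := hadd _ h _ h'
      rw [Nat.add_sub_cancel' hx] at this
      exact hF this
    · intro h
      by_contra h'
      exact hxm ((hmid x hx).1 ⟨h', h⟩)
  -- `a 0 = 1` would give `F = t` and `R = {0, t + 1, →}`.
  have hA2 : 2 ≤ a 0 := by
    by_contra hA
    have hA0 : a 0 ≠ 0 := fun h => hgap 0 (by omega) (by omega) h0
    refine hne ?_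
    ext x
    rw [mem_middle]
    constructor
    · intro hx
      by_contra hcon
      rcases Nat.lt_or_ge x t with hxt | hxt
      · exact hgap x (by omega) (by omega) hx
      · have : x = F := by omega
        exact hF (this ▸ hx)
    · rintro (rfl | hx)
      · exact h0
      · exact hF' x (by omega)
  obtain ⟨s, hs⟩ : ∃ s, a 0 = s + 1 := ⟨a 0 - 1, by omega⟩
  have hFs : F = 2 * s + t := by omega
  let S : Set ℕ := {x | (x < s ∧ x ∈ R) ∨ s < x}
  have hSs : s ∉ S := by simp [S]
  have hSs' : ∀ x, s < x → x ∈ S := fun x hx => .inr hx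
  have hSlt : ∀ x, x < s → (x ∈ S ↔ x ∈ R) := fun x hx =>
    ⟨fun h => h.elim And.right fun h => by omega, fun h => .inl ⟨hx, h⟩⟩
  -- Above the middle, membership in `R` is decided by the reflection.
  have hup : ∀ x, s + t < x → (x ∈ R ↔ (2 * s + t < x ∨ 2 * s + t - x ∉ S)) := by
    intro x hx
    rcases Nat.lt_or_ge F x with h | h
    · exact ⟨fun _ => .inl (by omega), fun _ => hF' x h⟩
    · rw [hsym x h (by omega), ← hFs, hSlt _ (by omega)]
      exact ⟨.inr, fun h' => h'.resolve_left (by omega)⟩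
  -- For `x = s` the reflection decides which of the two forms occurs.
  have hst : s ∈ R ↔ s + t ∉ R := by
    have := hsym s (by omega) (by omega)
    rwa [show F - s = s + t by omega] at this
  refine ⟨S, ⟨⟨.inl ⟨by omega, h0⟩, ?_, ⟨s, hSs⟩⟩, ?_⟩, ?_⟩
  · refine (Set.finite_Iic s).subset fun x hx => ?_
    by_contra h
    exact hx (hSs' x (by simpa using h))
  · by_cases hsR : s ∈ R
    · right
      ext x
      rw [mem_csum_bsum hSs hSs' (by omega)]
      rcases lt_trichotomy x s with h | rfl | h
      · rw [hSlt x h]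
        exact ⟨fun hx => .inl ⟨h, hx⟩, fun hx => hx.elim And.right fun hx => by omega⟩
      · exact ⟨fun _ => .inr (.inl rfl), fun _ => hsR⟩
      · rcases Nat.lt_or_ge (s + t) x with h' | h'
        · rw [hup x h']
          exact ⟨fun hx => .inr (.inr ⟨h', hx⟩),
            fun hx => hx.elim (fun hx => by omega) fun hx => hx.elim (fun hx => by omega) And.right⟩
        · refine iff_of_false (fun hx => ?_) (by omega)
          rcases h'.lt_or_eq with h'' | rfl
          · exact hgap x (by omega) (by omega) hx
          · exact hst.1 hsR hx
    · left
      ext x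
      rw [mem_bsum_csum hSs hSs']
      rcases lt_trichotomy x s with h | rfl | h
      · rw [hSlt x h]
        exact ⟨fun hx => .inl ⟨h, hx⟩, fun hx => hx.elim And.right fun hx => by omega⟩
      · exact iff_of_false hsR (by omega)
      · rcases lt_trichotomy (s + t) x with h' | rfl | h'
        · rw [hup x h']
          exact ⟨fun hx => .inr ⟨h'.le, hx⟩, fun hx => hx.elim (fun hx => by omega) And.right⟩
        · refine iff_of_true (by rw [hst, not_not] at hsR; exact hsR) (.inr ⟨le_rfl, .inr ?_⟩)
          rwa [show 2 * s + t - (s + t) = s by omega]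
        · exact iff_of_false (hgap x (by omega) (by omega)) (by omega)
  · rintro S' ⟨hS', hform⟩
    obtain ⟨hfr, hlow⟩ := composite_sum_spec (by omega) hS' hform
    obtain ⟨hs1, hs2, -⟩ := frob_spec hS'
    have e : frob S' = s := by omega
    rw [e] at hs1 hs2 hlow
    ext x
    rcases lt_trichotomy x s with h | rfl | h
    · rw [hSlt x h, hlow x h]
    · exact iff_of_false hs1 hSs
    · exact iff_of_true (hs2 x h) (hSs' x h)
end
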